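/- Fix an integer C ≥ 2 and distinct classes i, j ∈ {1,…,C}. The decoupled mixup loss satisfies L_DM(z) ≥ 0 for every z ∈ ℝ^C, and its infimum over ℝ^C equals 0: for every ε > 0 there exists z ∈ ℝ^C with L_DM(z) < ε. (Unlike L_MCE, the decoupled loss permits simultaneously confident predictions on both mixed classes.) -/

import Mathlib

noncomputable def dsoftmax {C : ℕ} (z : Fin C → ℝ) (i j : Fin C) : ℝ :=
  Real.exp (z i) / ∑ c ∈ Finset.univ.erase j, Real.exp (z c)

noncomputable def LDM {C : ℕ} (i j : Fin C) (z : Fin C → ℝ) : ℝ :=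
  -(Real.log (dsoftmax z i j) + Real.log (dsoftmax z j i))

/-!
Each decoupled softmax is a single positive term divided by a sum of positive terms containing it,
so it lies in `(0, 1]` and its logarithm is nonpositive. Since class `j` is missing from the
denominator of `φ(z)^{i,j}`, this ratio tends to `1` as soon as `z i` dominates every coordinate
other than `z j`. Raising `z i` and `z j` together therefore sends both ratios to `1`, and the loss
to `0`.
-/

open Filter Topology

section DecoupledMixup

variable {α : Type*} {l : Filter α} {C : ℕ} {i j : Fin C}

theorem dsoftmax_eq_inv_sum_exp_sub (z : Fin C → ℝ) (i j : Fin C) :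
    dsoftmax z i j = (∑ c ∈ Finset.univ.erase j, Real.exp (z c - z i))⁻¹ := by
  simp only [dsoftmax, Real.exp_sub, ← Finset.sum_div, inv_div]

theorem dsoftmax_nonneg (z : Fin C → ℝ) (i j : Fin C) : 0 ≤ dsoftmax z i j :=
  div_nonneg (Real.exp_nonneg _) (Finset.sum_nonneg fun _ _ => Real.exp_nonneg _)

theorem dsoftmax_le_one (z : Fin C → ℝ) (hij : i ≠ j) : dsoftmax z i j ≤ 1 := by
  have hi : i ∈ Finset.univ.erase j := Finset.mem_erase.mpr ⟨hij, Finset.mem_univ i⟩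
  exact div_le_one_of_le₀
    (Finset.single_le_sum (f := fun c => Real.exp (z c)) (fun _ _ => Real.exp_nonneg _) hi)
    (Finset.sum_nonneg fun _ _ => Real.exp_nonneg _)

theorem LDM_nonneg (z : Fin C → ℝ) (hij : i ≠ j) : 0 ≤ LDM i j z :=
  neg_nonneg.mpr <| add_nonpos
    (Real.log_nonpos (dsoftmax_nonneg z i j) (dsoftmax_le_one z hij))
    (Real.log_nonpos (dsoftmax_nonneg z j i) (dsoftmax_le_one z hij.symm))

theorem tendsto_dsoftmax_one {z : α → Fin C → ℝ} (hij : i ≠ j)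
    (hz : ∀ c, c ≠ i → c ≠ j → Tendsto (fun a => z a c - z a i) l atBot) :
    Tendsto (fun a => dsoftmax (z a) i j) l (𝓝 1) := by
  have hterm : ∀ c ∈ Finset.univ.erase j,
      Tendsto (fun a => Real.exp (z a c - z a i)) l (𝓝 (if c = i then 1 else 0)) := by
    intro c hc
    split_ifs with hci
    · simp only [hci, sub_self, Real.exp_zero, tendsto_const_nhds]
    · exact Real.tendsto_exp_atBot.comp (hz c hci (Finset.ne_of_mem_erase hc))
  have hsum : ∑ c ∈ Finset.univ.erase j, (if c = i then 1 else 0 : ℝ) = 1 := by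
    simp [hij]
  simpa only [dsoftmax_eq_inv_sum_exp_sub, hsum, inv_one] using
    (tendsto_finsetSum _ hterm).inv₀ (hsum.trans_ne one_ne_zero)

theorem tendsto_LDM_zero {z : α → Fin C → ℝ} (hij : i ≠ j)
    (hi : ∀ c, c ≠ i → c ≠ j → Tendsto (fun a => z a c - z a i) l atBot)
    (hj : ∀ c, c ≠ i → c ≠ j → Tendsto (fun a => z a c - z a j) l atBot) :
    Tendsto (fun a => LDM i j (z a)) l (𝓝 0) := by
  have hlog_i := (tendsto_dsoftmax_one hij hi).log one_ne_zero
  have hlog_j := (tendsto_dsoftmax_one hij.symm fun c hcj hci => hj c hci hcj).log one_ne_zero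
  simpa only [LDM, Real.log_one, add_zero, neg_zero] using (hlog_i.add hlog_j).neg

theorem tendsto_LDM_indicator_pair_atTop (hij : i ≠ j) :
    Tendsto (fun t : ℝ => LDM i j (Set.indicator {i, j} fun _ => t)) atTop (𝓝 0) := by
  apply tendsto_LDM_zero hij <;> intro c hci hcj <;>
    simpa [hci, hcj] using tendsto_neg_atTop_atBot

end DecoupledMixup

theorem stmt_13 (C : ℕ) (hC : 2 ≤ C) (i j : Fin C) (hij : i ≠ j) :
    (∀ z : Fin C → ℝ, 0 ≤ LDM i j z) ∧
    ∀ ε : ℝ, 0 < ε → ∃ z : Fin C → ℝ, LDM i j z < ε := by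
  refine ⟨fun z => LDM_nonneg z hij, fun ε hε => ?_⟩
  obtain ⟨t, ht⟩ := ((tendsto_LDM_indicator_pair_atTop hij).eventually_lt_const hε).exists
  exact ⟨_, ht⟩
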